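/- Suppose t is drawn at random from the probability distribution on ℒ with density proportional to e^{−q(t)}. Then for every standard basis vector e_j of ℝ^d contained in ℒ, the random variable ⟨t, e_j⟩ satisfies Var(⟨t, e_j⟩) ≤ Γ/k^{ν−1} with Γ = 14ν⁴R/(ω^{6ν−3}r²). -/

import Mathlib

open MeasureTheory Real InnerProductSpace

noncomputable section

variable {ν : ℕ}

/-- The coordinate index set of `ℝ^d`, `d = k_1 + ⋯ + k_ν`. -/
abbrev Idx (kk : Fin ν → ℕ) : Type := Σ j : Fin ν, Fin (kk j)

/-- The multi-index set, of cardinality `n = k_1 ⋯ k_ν`. -/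
abbrev MIdx (kk : Fin ν → ℕ) : Type := ∀ j : Fin ν, Fin (kk j)

/-- The ambient Euclidean space `ℝ^d`. -/
abbrev Spc (kk : Fin ν → ℕ) : Type := EuclideanSpace ℝ (Idx kk)

/-- The coordinate functional `t ↦ τ_{j,i}`. -/
def coordL (kk : Fin ν → ℕ) (p : Idx kk) : Spc kk →ₗ[ℝ] ℝ where
  toFun t := t p
  map_add' _ _ := rfl
  map_smul' _ _ := rfl

/-- The linear functional `t ↦ ⟨a_m, t⟩ = τ_{1,m_1} + ⋯ + τ_{ν,m_ν}`. -/
def linF (kk : Fin ν → ℕ) (m : MIdx kk) : Spc kk →ₗ[ℝ] ℝ :=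
  ∑ j : Fin ν, coordL kk ⟨j, m j⟩

/-- The column `a_m` of the constraint matrix `A`. -/
def colA (kk : Fin ν → ℕ) (m : MIdx kk) : Spc kk :=
  (WithLp.equiv 2 (Idx kk → ℝ)).symm (fun p => if p.2 = m p.1 then 1 else 0)

/-- The quadratic form `q(t) = (1/2) ∑_m α_m (τ_{1,m_1} + ⋯ + τ_{ν,m_ν})²`. -/
def qform (kk : Fin ν → ℕ) (α : MIdx kk → ℝ) (t : Spc kk) : ℝ :=
  (1/2) * ∑ m : MIdx kk, α m * (linF kk m t)^2

/-- The symmetric positive semidefinite matrix `B` with `q(t) = (1/2)⟨t, Bt⟩`,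
given explicitly as `B = ∑_m α_m a_m a_mᵀ`. -/
def Bmat (kk : Fin ν → ℕ) (α : MIdx kk → ℝ) : Spc kk →ₗ[ℝ] Spc kk :=
  ∑ m : MIdx kk, α m • (linF kk m).smulRight (colA kk m)

/-- The sup norm `‖t‖_∞`. -/
def supNorm (kk : Fin ν → ℕ) (t : Spc kk) : ℝ := ‖(WithLp.equiv 2 (Idx kk → ℝ)) t‖

/-- The subspace `ℒ = {t : τ_{j,k_j} = 0 for j = 2,…,ν}`. -/
def Lsub (kk : Fin ν → ℕ) (hk : ∀ j, 0 < kk j) : Submodule ℝ (Spc kk) :=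
  ⨅ (j : {j : Fin ν // (j : ℕ) ≠ 0}),
    LinearMap.ker (coordL kk ⟨j.1, ⟨kk j.1 - 1, Nat.sub_lt (hk j.1) one_pos⟩⟩)

/-- The expectation of `f` under the probability distribution on `ℒ` with density
proportional to `e^{−q(t)}`. -/
def expL (kk : Fin ν → ℕ) (hk : ∀ j, 0 < kk j) (α : MIdx kk → ℝ) (f : Spc kk → ℝ) : ℝ :=
  (∫ t : ↥(Lsub kk hk), f (t : Spc kk) * Real.exp (-(qform kk α (t : Spc kk)))) /
    (∫ t : ↥(Lsub kk hk), Real.exp (-(qform kk α (t : Spc kk))))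

/-! With `B t t = 2 q t`, the coordinate functional `l t = t p` is `B u` for some `u ∈ ℒ`, and
integrating by parts in the direction `u` gives `E[l²] = B u u = l u`. Hence `E[l²] ≤ c` as soon as
`l² ≤ c B`, and the variance of `l` is at most `E[l²]`.

It remains to bound one coordinate by `∑ m, (τ_{1,m_1} + ⋯ + τ_{ν,m_ν})²`. Adding constants of sum
`0` to the blocks of `t` does not change these sums, and makes all blocks but one centered. The
blocks are then orthogonal as functions of `m`, so the sum of squares splits over the blocks, and
in it each entry is repeated at least `(ωk)^(ν-1)` times. On `ℒ` a coordinate is either one of the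
sums `τ_{1,m_1} + ⋯ + τ_{ν,m_ν}` or a difference of two entries of one block, both of which are
insensitive to the added constants. -/

section GaussianWeight

variable {E : Type*} [NormedAddCommGroup E] [NormedSpace ℝ E]

/-- The unnormalized density `exp (-B(t,t)/2)` of the centered Gaussian distribution whose inverse
covariance is the bilinear form `B`. -/
def gaussianWeight (B : E →L[ℝ] E →L[ℝ] ℝ) (t : E) : ℝ := exp (-(1 / 2 * B t t))

variable {B : E →L[ℝ] E →L[ℝ] ℝ}

lemma gaussianWeight_pos (t : E) : 0 < gaussianWeight B t := exp_pos _

lemma differentiable_gaussianWeight : Differentiable ℝ (gaussianWeight B) := by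
  unfold gaussianWeight
  fun_prop

lemma fderiv_gaussianWeight_apply (hsymm : ∀ s t, B s t = B t s) (t u : E) :
    fderiv ℝ (gaussianWeight B) t u = -(B u t * gaussianWeight B t) := by
  have hquad : HasFDerivAt (fun s ↦ B s s) (B t + B.flip t) t :=
    B.hasFDerivAt.clm_apply (hasFDerivAt_id t)
  have hweight : HasFDerivAt (gaussianWeight B) _ t := (hquad.const_mul (1 / 2)).neg.exp
  rw [hweight.fderiv]
  simp only [gaussianWeight, Pi.neg_apply, smul_apply, neg_apply, add_apply,
    ContinuousLinearMap.flip_apply, smul_eq_mul, hsymm t u]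
  ring

end GaussianWeight

section GaussianMoments

variable {E : Type*} [NormedAddCommGroup E] [InnerProductSpace ℝ E]
  {B : E →L[ℝ] E →L[ℝ] ℝ}

lemma exists_eq_of_isCoercive [CompleteSpace E] (hB : IsCoercive B) (l : E →L[ℝ] ℝ) :
    ∃ u, B u = l := by
  refine ⟨hB.continuousLinearEquivOfBilin.symm ((toDual ℝ E).symm l), ?_⟩
  ext t
  rw [← hB.continuousLinearEquivOfBilin_apply, ContinuousLinearEquiv.apply_symm_apply,
    toDual_symm_apply]

variable [FiniteDimensional ℝ E] [MeasurableSpace E] [BorelSpace E]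

lemma integrable_exp_neg_mul_sq_norm {b : ℝ} (hb : 0 < b) :
    Integrable fun t : E ↦ exp (-b * ‖t‖ ^ 2) := by
  refine .of_integral_ne_zero ?_
  rw [GaussianFourier.integral_rexp_neg_mul_sq_norm hb]
  positivity

lemma integrable_norm_pow_mul_exp_neg_mul_sq_norm {b : ℝ} (hb : 0 < b) (n : ℕ) :
    Integrable fun t : E ↦ ‖t‖ ^ n * exp (-b * ‖t‖ ^ 2) := by
  refine ((integrable_exp_neg_mul_sq_norm (E := E) (half_pos hb)).const_mul
    (n.factorial * exp (1 / (2 * b)))).mono' (by fun_prop) (.of_forall fun t ↦ ?_)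
  have hpow : ‖t‖ ^ n ≤ n.factorial * exp ‖t‖ := by
    rw [← div_le_iff₀' (by positivity)]
    exact pow_div_factorial_le_exp _ (norm_nonneg t) n
  have hamgm : ‖t‖ ≤ 1 / (2 * b) + b / 2 * ‖t‖ ^ 2 := by
    have : 1 / (2 * b) + b / 2 * ‖t‖ ^ 2 - ‖t‖ = (b * ‖t‖ - 1) ^ 2 / (2 * b) := by
      field_simp
      ring
    have : 0 ≤ (b * ‖t‖ - 1) ^ 2 / (2 * b) := by positivity
    linarith
  calc ‖‖t‖ ^ n * exp (-b * ‖t‖ ^ 2)‖ = ‖t‖ ^ n * exp (-b * ‖t‖ ^ 2) :=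
        norm_of_nonneg (by positivity)
    _ ≤ n.factorial * exp (1 / (2 * b) + b / 2 * ‖t‖ ^ 2) * exp (-b * ‖t‖ ^ 2) := by
        gcongr
        exact hpow.trans (by gcongr)
    _ = n.factorial * exp (1 / (2 * b)) * exp (-(b / 2) * ‖t‖ ^ 2) := by
        rw [mul_assoc, mul_assoc, ← exp_add, ← exp_add]
        ring_nf

lemma integrable_pow_mul_gaussianWeight (hB : IsCoercive B) (l : E →L[ℝ] ℝ) (n : ℕ) :
    Integrable fun t ↦ l t ^ n * gaussianWeight B t := by
  obtain ⟨C, hC, hcoercive⟩ := hB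
  have hmeas : Continuous fun t ↦ l t ^ n * gaussianWeight B t :=
    (by fun_prop : Continuous fun t ↦ l t ^ n).mul differentiable_gaussianWeight.continuous
  refine ((integrable_norm_pow_mul_exp_neg_mul_sq_norm (E := E) (half_pos hC) n).const_mul
    (‖l‖ ^ n)).mono' hmeas.aestronglyMeasurable (.of_forall fun t ↦ ?_)
  rw [norm_mul, norm_pow, norm_of_nonneg (gaussianWeight_pos t).le, ← mul_assoc, ← mul_pow]
  gcongr
  · exact (gaussianWeight_pos t).le
  · exact l.le_opNorm t
  · exact exp_le_exp.2 (by linarith [hcoercive t])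

lemma integrable_gaussianWeight (hB : IsCoercive B) : Integrable (gaussianWeight B) := by
  simpa using integrable_pow_mul_gaussianWeight hB 0 0

lemma integral_gaussianWeight_pos (hB : IsCoercive B) : 0 < ∫ t, gaussianWeight B t :=
  integral_exp_pos (integrable_gaussianWeight hB)

theorem integral_sq_mul_gaussianWeight (hB : IsCoercive B) (hsymm : ∀ s t, B s t = B t s) (u : E) :
    ∫ t, B u t ^ 2 * gaussianWeight B t = B u u * ∫ t, gaussianWeight B t := by
  have hderiv (t : E) : B u t * fderiv ℝ (gaussianWeight B) t u =
      -(B u t ^ 2 * gaussianWeight B t) := by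
    rw [fderiv_gaussianWeight_apply hsymm]
    ring
  have hparts := integral_mul_fderiv_eq_neg_fderiv_mul_of_integrable (μ := volume)
    (f := B u) (g := gaussianWeight B) (v := u)
    (by simpa using (integrable_gaussianWeight hB).const_mul (B u u))
    (by simpa only [hderiv] using (integrable_pow_mul_gaussianWeight hB (B u) 2).fun_neg)
    (by simpa using integrable_pow_mul_gaussianWeight hB (B u) 1)
    (fun _ _ ↦ (B u).differentiableAt) (fun t _ ↦ differentiable_gaussianWeight t)
  simpa only [hderiv, ContinuousLinearMap.fderiv, integral_neg, integral_const_mul, neg_inj]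
    using hparts

theorem integral_sq_mul_gaussianWeight_div_le (hB : IsCoercive B) (hsymm : ∀ s t, B s t = B t s)
    {l : E →L[ℝ] ℝ} {c : ℝ} (hc : 0 ≤ c) (hl : ∀ t, l t ^ 2 ≤ c * B t t) :
    (∫ t, l t ^ 2 * gaussianWeight B t) / ∫ t, gaussianWeight B t ≤ c := by
  obtain ⟨u, rfl⟩ := exists_eq_of_isCoercive hB l
  rw [integral_sq_mul_gaussianWeight hB hsymm, mul_div_cancel_right₀ _
    (integral_gaussianWeight_pos hB).ne']
  by_contra! hlt
  nlinarith [hl u]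

end GaussianMoments

section AdditiveFunctions

variable {ι : Type*} [Fintype ι]

lemma sq_sub_le_two_mul_sum_sq (g : ι → ℝ) (i i' : ι) :
    (g i - g i') ^ 2 ≤ 2 * ∑ l, g l ^ 2 := by
  classical
  have hsum : 0 ≤ ∑ l, g l ^ 2 := Finset.sum_nonneg fun l _ ↦ sq_nonneg (g l)
  obtain rfl | hne := eq_or_ne i i'
  · simpa using hsum
  · have hpair : g i ^ 2 + g i' ^ 2 ≤ ∑ l, g l ^ 2 := by
      rw [← Finset.sum_pair (f := fun l ↦ g l ^ 2) hne]
      exact Finset.sum_le_univ_sum_of_nonneg fun l ↦ sq_nonneg (g l)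
    linarith [sq_nonneg (g i + g i')]

variable {κ : ι → Type*} [∀ j, Fintype (κ j)]

lemma exists_shift_sum_eq_zero {K : Type*} [Field K] [CharZero K] [∀ j, Nonempty (κ j)] (j₀ : ι)
    (x : ∀ j, κ j → K) :
    ∃ c : ι → K, ∑ j, c j = 0 ∧ ∀ j ≠ j₀, ∑ i, (x j i + c j) = 0 := by
  classical
  let mean (j : ι) : K := (∑ i, x j i) / Fintype.card (κ j)
  let c (j : ι) : K := (if j = j₀ then ∑ l, mean l else 0) - mean j
  refine ⟨c, by simp [c], fun j hj ↦ ?_⟩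
  simp [c, mean, Finset.sum_add_distrib, hj, mul_div_cancel₀]

variable [DecidableEq ι]

lemma sum_apply_mul_restrict {R : Type*} [CommSemiring R] (j : ι) (g : κ j → R)
    (h : (∀ l : {l // l ≠ j}, κ l) → R) :
    ∑ m : ∀ l, κ l, g (m j) * h (fun l ↦ m l) = (∑ i, g i) * ∑ m', h m' := by
  rw [Finset.sum_mul_sum, ← Fintype.sum_prod_type']
  exact Fintype.sum_equiv (Equiv.piSplitAt j κ) _ _ fun _ ↦ rfl

lemma sum_apply_mul_apply_eq_zero {R : Type*} [CommSemiring R] {j l : ι} (hlj : l ≠ j)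
    {g : κ j → R} (hg : ∑ i, g i = 0) (h : κ l → R) :
    ∑ m : ∀ l, κ l, g (m j) * h (m l) = 0 := by
  rw [sum_apply_mul_restrict j g fun m' ↦ h (m' ⟨l, hlj⟩), hg, zero_mul]

lemma pow_mul_sum_le_sum_apply {w : ℝ} (hw : 0 ≤ w) (hcard : ∀ j, w ≤ Fintype.card (κ j)) (j : ι)
    {g : κ j → ℝ} (hg : ∀ i, 0 ≤ g i) :
    w ^ (Fintype.card ι - 1) * ∑ i, g i ≤ ∑ m : ∀ l, κ l, g (m j) := by
  have hrest : w ^ (Fintype.card ι - 1) ≤ Fintype.card (∀ l : {l // l ≠ j}, κ l) := by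
    calc w ^ (Fintype.card ι - 1) = ∏ _l : {l // l ≠ j}, w := by
          simp [Fintype.card_subtype_compl]
      _ ≤ ∏ l : {l // l ≠ j}, (Fintype.card (κ l) : ℝ) :=
          Finset.prod_le_prod (fun _ _ ↦ hw) fun l _ ↦ hcard l
      _ = Fintype.card (∀ l : {l // l ≠ j}, κ l) := by simp [Fintype.card_pi]
  have hsum := sum_apply_mul_restrict j g 1
  simp only [Pi.one_apply, mul_one, Finset.sum_const, Finset.card_univ, nsmul_eq_mul] at hsum
  rw [hsum, mul_comm]
  exact mul_le_mul_of_nonneg_left hrest (Finset.sum_nonneg fun i _ ↦ hg i)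

lemma sum_sq_sum_apply_of_sum_eq_zero {R : Type*} [CommSemiring R] (j₀ : ι) {y : ∀ j, κ j → R}
    (hy : ∀ j ≠ j₀, ∑ i, y j i = 0) :
    ∑ m : ∀ l, κ l, (∑ j, y j (m j)) ^ 2 = ∑ j, ∑ m : ∀ l, κ l, y j (m j) ^ 2 := by
  have horth (j l : ι) (hlj : l ≠ j) : ∑ m : ∀ l, κ l, y j (m j) * y l (m l) = 0 := by
    by_cases hj : j = j₀
    · simp_rw [mul_comm (y j _)]
      exact sum_apply_mul_apply_eq_zero hlj.symm (hy l (hj ▸ hlj)) _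
    · exact sum_apply_mul_apply_eq_zero hlj (hy j hj) _
  simp_rw [sq, Finset.sum_mul_sum]
  rw [Finset.sum_comm]
  refine Finset.sum_congr rfl fun j _ ↦ ?_
  rw [Finset.sum_comm]
  exact Fintype.sum_eq_single j fun l hlj ↦ horth j l hlj

lemma exists_shift_sum_sq_eq {K : Type*} [Field K] [CharZero K] [Nonempty ι]
    [∀ j, Nonempty (κ j)] (x : ∀ j, κ j → K) :
    ∃ c : ι → K, ∑ j, c j = 0 ∧
      ∑ m : ∀ l, κ l, (∑ j, x j (m j)) ^ 2 = ∑ j, ∑ m : ∀ l, κ l, (x j (m j) + c j) ^ 2 := by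
  obtain ⟨j₀⟩ := ‹Nonempty ι›
  obtain ⟨c, hc, hcentered⟩ := exists_shift_sum_eq_zero j₀ x
  refine ⟨c, hc, ?_⟩
  rw [← sum_sq_sum_apply_of_sum_eq_zero j₀ hcentered]
  simp only [Finset.sum_add_distrib, hc, add_zero]

theorem pow_mul_sq_sum_apply_le [Nonempty ι] [∀ j, Nonempty (κ j)] {w : ℝ} (hw : 0 ≤ w)
    (hcard : ∀ j, w ≤ Fintype.card (κ j)) (x : ∀ j, κ j → ℝ) (m : ∀ j, κ j) :
    w ^ (Fintype.card ι - 1) * (∑ j, x j (m j)) ^ 2 ≤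
      Fintype.card ι * ∑ m' : ∀ j, κ j, (∑ j, x j (m' j)) ^ 2 := by
  obtain ⟨c, hc, hsplit⟩ := exists_shift_sum_sq_eq x
  have hblock (j : ι) : w ^ (Fintype.card ι - 1) * (x j (m j) + c j) ^ 2 ≤
      ∑ m' : ∀ l, κ l, (x j (m' j) + c j) ^ 2 := by
    refine le_trans ?_ (pow_mul_sum_le_sum_apply hw hcard j fun i ↦ sq_nonneg (x j i + c j))
    gcongr
    exact Finset.single_le_sum (f := fun i ↦ (x j i + c j) ^ 2) (fun i _ ↦ sq_nonneg _)
      (Finset.mem_univ (m j))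
  calc w ^ (Fintype.card ι - 1) * (∑ j, x j (m j)) ^ 2
      = w ^ (Fintype.card ι - 1) * (∑ j, (x j (m j) + c j)) ^ 2 := by
        rw [Finset.sum_add_distrib, hc, add_zero]
    _ ≤ w ^ (Fintype.card ι - 1) * (Fintype.card ι * ∑ j, (x j (m j) + c j) ^ 2) := by
        gcongr
        exact sq_sum_le_card_mul_sum_sq
    _ = Fintype.card ι * ∑ j, w ^ (Fintype.card ι - 1) * (x j (m j) + c j) ^ 2 := by
        rw [← Finset.mul_sum, mul_left_comm]
    _ ≤ Fintype.card ι * ∑ m' : ∀ j, κ j, (∑ j, x j (m' j)) ^ 2 := by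
        rw [hsplit]
        gcongr with j
        exact hblock j

theorem pow_mul_sq_sub_le [∀ j, Nonempty (κ j)] {w : ℝ} (hw : 0 ≤ w)
    (hcard : ∀ j, w ≤ Fintype.card (κ j)) (x : ∀ j, κ j → ℝ) (j : ι) (i i' : κ j) :
    w ^ (Fintype.card ι - 1) * (x j i - x j i') ^ 2 ≤
      2 * ∑ m : ∀ j, κ j, (∑ j, x j (m j)) ^ 2 := by
  have : Nonempty ι := ⟨j⟩
  obtain ⟨c, -, hsplit⟩ := exists_shift_sum_sq_eq x
  calc w ^ (Fintype.card ι - 1) * (x j i - x j i') ^ 2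
      ≤ w ^ (Fintype.card ι - 1) * (2 * ∑ l, (x j l + c j) ^ 2) := by
        gcongr
        simpa using sq_sub_le_two_mul_sum_sq (fun l ↦ x j l + c j) i i'
    _ ≤ 2 * ∑ m : ∀ l, κ l, (x j (m j) + c j) ^ 2 := by
        rw [mul_left_comm]
        gcongr
        exact pow_mul_sum_le_sum_apply hw hcard j fun l ↦ sq_nonneg (x j l + c j)
    _ ≤ 2 * ∑ m : ∀ j, κ j, (∑ j, x j (m j)) ^ 2 := by
        rw [hsplit]
        gcongr
        exact Finset.single_le_sum (f := fun j ↦ ∑ m : ∀ l, κ l, (x j (m j) + c j) ^ 2)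
          (fun j _ ↦ Finset.sum_nonneg fun m _ ↦ sq_nonneg _) (Finset.mem_univ j)

end AdditiveFunctions

section GramForm

variable {E ι : Type*} [NormedAddCommGroup E] [NormedSpace ℝ E] [Fintype ι]

/-- The bilinear form `(s, t) ↦ ∑ m, α m * L m s * L m t`, the polarization of the weighted sum of
squares `∑ m, α m * (L m t) ^ 2`. -/
def gramForm (α : ι → ℝ) (L : ι → E →L[ℝ] ℝ) : E →L[ℝ] E →L[ℝ] ℝ :=
  ∑ m, α m • (L m).smulRight (L m)

lemma gramForm_apply (α : ι → ℝ) (L : ι → E →L[ℝ] ℝ) (s t : E) :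
    gramForm α L s t = ∑ m, α m * (L m s * L m t) := by
  simp [gramForm]

lemma gramForm_comm (α : ι → ℝ) (L : ι → E →L[ℝ] ℝ) (s t : E) :
    gramForm α L s t = gramForm α L t s := by
  simp only [gramForm_apply, mul_comm (L _ s)]

end GramForm

section Coordinates

variable {kk : Fin ν → ℕ} {hk : ∀ j, 0 < kk j}

/-- The multi-index `(k_1, …, k_ν)` of the last position in each block. -/
def lastIdx (hk : ∀ j, 0 < kk j) : MIdx kk := fun j ↦ ⟨kk j - 1, Nat.sub_lt (hk j) one_pos⟩

lemma linF_apply (m : MIdx kk) (t : Spc kk) : linF kk m t = ∑ j, t ⟨j, m j⟩ := by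
  rw [linF, LinearMap.sum_apply]
  rfl

lemma apply_lastIdx_of_mem_Lsub {t : Spc kk} (ht : t ∈ Lsub kk hk) {j : Fin ν} (hj : (j : ℕ) ≠ 0) :
    t ⟨j, lastIdx hk j⟩ = 0 :=
  (Submodule.mem_iInf _).1 ht ⟨j, hj⟩

lemma linF_update_lastIdx {t : Spc kk} (ht : t ∈ Lsub kk hk) {j : Fin ν} (hj : (j : ℕ) = 0)
    (i : Fin (kk j)) : linF kk (Function.update (lastIdx hk) j i) t = t ⟨j, i⟩ := by
  rw [linF_apply, Fintype.sum_eq_single j, Function.update_self]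
  intro l hlj
  rw [Function.update_of_ne hlj]
  exact apply_lastIdx_of_mem_Lsub ht fun hl ↦ hlj (Fin.ext (hl.trans hj.symm))

lemma pow_mul_sq_apply_le_sum_sq_linF {w : ℝ} (hw : 0 ≤ w) (hlow : ∀ j, w ≤ kk j) {t : Spc kk}
    (ht : t ∈ Lsub kk hk) (p : Idx kk) :
    w ^ (ν - 1) * t p ^ 2 ≤ ν * ∑ m : MIdx kk, linF kk m t ^ 2 := by
  obtain ⟨j, i⟩ := p
  have : Nonempty (Fin ν) := ⟨j⟩
  have (l : Fin ν) : Nonempty (Fin (kk l)) := ⟨lastIdx hk l⟩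
  have hcard (l : Fin ν) : w ≤ Fintype.card (Fin (kk l)) := by simpa using hlow l
  by_cases hj : (j : ℕ) = 0
  · rw [← linF_update_lastIdx ht hj]
    simpa only [linF_apply, Fintype.card_fin] using
      pow_mul_sq_sum_apply_le hw hcard (fun l i' ↦ t ⟨l, i'⟩) (Function.update (lastIdx hk) j i)
  · have hdiff := pow_mul_sq_sub_le hw hcard (fun l i' ↦ t ⟨l, i'⟩) j i (lastIdx hk j)
    simp only [apply_lastIdx_of_mem_Lsub ht hj, sub_zero, Fintype.card_fin, ← linF_apply] at hdiff
    refine hdiff.trans ?_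
    gcongr
    exact_mod_cast (by lia : 2 ≤ ν)

variable (hk) in
/-- The linear functional `t ↦ τ_{1,m_1} + ⋯ + τ_{ν,m_ν}` restricted to `ℒ`. -/
def linFOnLsub (m : MIdx kk) : Lsub kk hk →L[ℝ] ℝ :=
  (linF kk m).toContinuousLinearMap ∘L (Lsub kk hk).subtypeL

variable (hk) in
/-- The coordinate functional `t ↦ τ_{j,i}` restricted to `ℒ`. -/
def coordOnLsub (p : Idx kk) : Lsub kk hk →L[ℝ] ℝ :=
  (coordL kk p).toContinuousLinearMap ∘L (Lsub kk hk).subtypeL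

lemma gramForm_linFOnLsub_self (α : MIdx kk → ℝ) (t : Lsub kk hk) :
    gramForm α (linFOnLsub hk) t t = ∑ m, α m * linF kk m t ^ 2 := by
  simp [gramForm_apply, linFOnLsub, sq]

lemma gaussianWeight_gramForm_linFOnLsub (α : MIdx kk → ℝ) (t : Lsub kk hk) :
    gaussianWeight (gramForm α (linFOnLsub hk)) t = exp (-(qform kk α t)) := by
  rw [gaussianWeight, gramForm_linFOnLsub_self, qform]

variable {α : MIdx kk → ℝ} {r w : ℝ}

lemma sq_coordOnLsub_le (hr : 0 < r) (hw : 0 < w) (hlow : ∀ j, w ≤ kk j) (hα : ∀ m, r ≤ α m)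
    (p : Idx kk) (t : Lsub kk hk) :
    coordOnLsub hk p t ^ 2 ≤ ν / (r * w ^ (ν - 1)) * gramForm α (linFOnLsub hk) t t := by
  have hweights : r * ∑ m, linF kk m t ^ 2 ≤ gramForm α (linFOnLsub hk) t t := by
    rw [gramForm_linFOnLsub_self, Finset.mul_sum]
    gcongr with m
    exact hα m
  rw [div_mul_eq_mul_div, le_div_iff₀ (by positivity)]
  calc coordOnLsub hk p t ^ 2 * (r * w ^ (ν - 1))
      = r * (w ^ (ν - 1) * (t : Spc kk) p ^ 2) := by
        change (t : Spc kk) p ^ 2 * (r * w ^ (ν - 1)) = _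
        ring
    _ ≤ r * (ν * ∑ m, linF kk m t ^ 2) := by
        gcongr r * ?_
        exact pow_mul_sq_apply_le_sum_sq_linF hw.le hlow t.2 p
    _ = ν * (r * ∑ m, linF kk m t ^ 2) := mul_left_comm ..
    _ ≤ ν * gramForm α (linFOnLsub hk) t t := by gcongr

lemma isCoercive_gramForm_linFOnLsub [Nonempty (Idx kk)] (hr : 0 < r) (hw : 0 < w)
    (hlow : ∀ j, w ≤ kk j) (hα : ∀ m, r ≤ α m) : IsCoercive (gramForm α (linFOnLsub hk)) := by
  have hν : 0 < ν := (Classical.arbitrary (Idx kk)).1.pos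
  set c : ℝ := ν / (r * w ^ (ν - 1))
  have hC : 0 < Fintype.card (Idx kk) * c := by positivity
  refine ⟨(Fintype.card (Idx kk) * c)⁻¹, inv_pos.2 hC, fun t ↦ ?_⟩
  rw [mul_assoc, inv_mul_le_iff₀ hC, ← sq, Submodule.coe_norm, EuclideanSpace.real_norm_sq_eq,
    mul_assoc, ← nsmul_eq_mul, ← Finset.card_univ]
  exact Finset.sum_le_card_nsmul _ _ _ fun p _ ↦ sq_coordOnLsub_le hr hw hlow hα p t

end Coordinates

theorem statement7_general (kk : Fin ν → ℕ) (hk : ∀ j, 0 < kk j) {r w : ℝ} (hr : 0 < r)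
    (hw : 0 < w) (hlow : ∀ j, w ≤ kk j) {α : MIdx kk → ℝ} (hα : ∀ m, r ≤ α m) (p : Idx kk) :
    expL kk hk α (fun t ↦ t p ^ 2) - expL kk hk α (fun t ↦ t p) ^ 2 ≤ ν / (r * w ^ (ν - 1)) := by
  have : Nonempty (Idx kk) := ⟨p⟩
  have hmoment := integral_sq_mul_gaussianWeight_div_le
    (isCoercive_gramForm_linFOnLsub (hk := hk) hr hw hlow hα) (gramForm_comm α _) (by positivity)
    (sq_coordOnLsub_le hr hw hlow hα p)
  simp only [gaussianWeight_gramForm_linFOnLsub] at hmoment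
  exact (sub_le_self _ (sq_nonneg _)).trans hmoment

lemma div_mul_pow_le_div_pow {r R ω k : ℝ} (hr : 0 < r) (hrR : r ≤ R) (hω0 : 0 < ω) (hω1 : ω ≤ 1)
    (hk : 0 < k) (ν : ℕ) :
    ν / (r * (ω * k) ^ (ν - 1)) ≤
      (14 * (ν : ℝ) ^ 4 * R / (ω ^ (6 * ν - 3) * r ^ 2)) / k ^ (ν - 1) := by
  have hν : (ν : ℝ) ≤ 14 * (ν : ℝ) ^ 4 := by
    norm_cast
    linarith [Nat.le_self_pow (by norm_num : 4 ≠ 0) ν]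
  have hω : ω ^ (6 * ν - 3) ≤ ω ^ (ν - 1) := pow_le_pow_of_le_one hω0.le hω1 (by lia)
  have hR : 0 < R := hr.trans_le hrR
  calc ν / (r * (ω * k) ^ (ν - 1)) = ν * r / (ω ^ (ν - 1) * r ^ 2) / k ^ (ν - 1) := by
        rw [mul_pow]
        field_simp
    _ ≤ _ := by gcongr

/-- If `t` is drawn from the distribution on `ℒ` with density proportional
to `e^{−q(t)}`, then for every standard basis vector `e_j ∈ ℒ` the random variable `⟨t, e_j⟩`
has variance at most `Γ/k^{ν−1}` with `Γ = 14ν⁴R/(ω^{6ν−3}r²)`. -/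
theorem statement7 (ν : ℕ) (hν : 2 ≤ ν) (kk : Fin ν → ℕ) (hkk : ∀ j, 2 ≤ kk j)
    (hk : ∀ j, 0 < kk j)
    (r R ω k : ℝ) (hr : 0 < r) (hrR : r ≤ R) (hω0 : 0 < ω) (hω1 : ω ≤ 1)
    (hωk : 1 ≤ ω * k) (hlow : ∀ j, ω * k ≤ kk j) (hhigh : ∀ j, (kk j : ℝ) ≤ k)
    (α : MIdx kk → ℝ) (hα1 : ∀ m, r ≤ α m) (hα2 : ∀ m, α m ≤ R)
    (p : Idx kk) (hp : EuclideanSpace.single p (1 : ℝ) ∈ Lsub kk hk) :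
    expL kk hk α (fun t => (t p)^2) - (expL kk hk α (fun t => t p))^2
      ≤ (14 * (ν : ℝ)^4 * R / (ω ^ (6 * ν - 3) * r^2)) / k ^ (ν - 1) :=
  (statement7_general kk hk hr (one_pos.trans_le hωk) hlow hα1 p).trans
    (div_mul_pow_le_div_pow hr hrR hω0 hω1 (pos_of_mul_pos_right (one_pos.trans_le hωk) hω0.le) ν)
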